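/- (Proposition 3.4, upper bound of Henrot–Lemenant–Lucardesi type.) Let Ω ⊆ ℝ² be a bounded open set with area A := |Ω| > 0 and minimal width w := w(Ω). Then μ₁(Ω) ≤ π²·w²/A². -/

import Mathlib

open MeasureTheory Filter Set Real RealInnerProductSpace

noncomputable section

abbrev E2 : Type := EuclideanSpace ℝ (Fin 2)

/-- First Dirichlet eigenvalue, variational characterization. -/
noncomputable def dEig1 (Ω : Set E2) : ℝ :=
  sInf { R : ℝ | ∃ u : E2 → ℝ, ContDiff ℝ (⊤ : ℕ∞) u ∧ HasCompactSupport u ∧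
    tsupport u ⊆ Ω ∧ (∫ x, (u x)^2) ≠ 0 ∧
    R = (∫ x, ‖fderiv ℝ u x‖^2) / (∫ x, (u x)^2) }

/-- First nontrivial Neumann eigenvalue, variational characterization. -/
noncomputable def nEig1 (Ω : Set E2) : ℝ :=
  sInf { R : ℝ | ∃ u : E2 → ℝ, ContDiff ℝ (⊤ : ℕ∞) u ∧ (∫ x in Ω, u x) = 0 ∧
    (∫ x in Ω, (u x)^2) ≠ 0 ∧
    R = (∫ x in Ω, ‖fderiv ℝ u x‖^2) / (∫ x in Ω, (u x)^2) }

/-- The open unit disc in the plane. -/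
def unitDisc : Set E2 := Metric.ball 0 1

/-- The minimal width of a bounded plane set: the infimum over unit directions `ξ` of the
width of the smallest strip orthogonal to `ξ` enclosing the set. -/
noncomputable def minWidth (Ω : Set E2) : ℝ :=
  sInf { w : ℝ | ∃ ξ : E2, ‖ξ‖ = 1 ∧
    w = sSup { r : ℝ | ∃ x ∈ Ω, r = ⟪x, ξ⟫ } - sInf { r : ℝ | ∃ x ∈ Ω, r = ⟪x, ξ⟫ } }

/-!
Let `Ω` lie in a strip of width `w` orthogonal to the unit vector `ξ`, and let `η` be a unit vector
orthogonal to `ξ`. Under the uniform probability on `Ω`, the coordinate `⟪η, x⟫` has a density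
bounded by `w / A`, so its distribution function `F` is `w / A`-Lipschitz, and `F ⟪η, x⟫` is
uniformly distributed on `[0, 1]`. The test function `cos (π F ⟪η, x⟫)` therefore has mean zero and
variance `1 / 2`, while its squared gradient, at most `(π w / A)² sin² (π F ⟪η, x⟫)`, has mean at
most `(π w / A)² / 2`. As `F` is only Lipschitz, it is first mollified without increasing its
Lipschitz constant; the mean of the test function is then no longer zero, so the Rayleigh quotient
inequality is used in its Poincaré form, with the variance of `u` in place of the mean of `u²`.
-/

open ProbabilityTheory Topology
open scoped Convolution ContDiff NNReal

section Distribution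

variable {μ : Measure ℝ}

lemma Ioo_zero_one_subset_range_cdf (hμ : Continuous (cdf μ)) : Ioo 0 1 ⊆ range (cdf μ) := by
  rintro s ⟨hs₀, hs₁⟩
  exact mem_range_of_exists_le_of_exists_ge hμ
    ((tendsto_cdf_atBot μ).eventually_le_const hs₀).exists
    ((tendsto_cdf_atTop μ).eventually_const_le hs₁).exists

variable [IsProbabilityMeasure μ]

lemma lipschitzWith_cdf_of_le_smul_volume {K : ℝ≥0} (hμ : μ ≤ K • volume) :
    LipschitzWith K (cdf μ) := by
  refine LipschitzWith.of_le_add_mul K fun x y => ?_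
  rcases le_total x y with hxy | hyx
  · exact (monotone_cdf μ hxy).trans (le_add_of_nonneg_right (by positivity))
  have hIoc : ENNReal.ofReal (cdf μ x - cdf μ y) ≤ ENNReal.ofReal (K * (x - y)) := by
    calc ENNReal.ofReal (cdf μ x - cdf μ y) = μ (Ioc y x) := by
          rw [← StieltjesFunction.measure_Ioc, measure_cdf]
      _ ≤ (K • volume : Measure ℝ) (Ioc y x) := hμ _
      _ = ENNReal.ofReal (K * (x - y)) := by
          rw [Measure.smul_apply, Real.volume_Ioc, ENNReal.smul_def, smul_eq_mul,
            ENNReal.ofReal_mul K.coe_nonneg, ENNReal.ofReal_coe_nnreal]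
  rw [ENNReal.ofReal_le_ofReal_iff (mul_nonneg K.coe_nonneg (sub_nonneg.2 hyx))] at hIoc
  rw [Real.dist_eq, abs_of_nonneg (sub_nonneg.2 hyx)]
  linarith

lemma measureReal_cdf_le (hμ : Continuous (cdf μ)) {s : ℝ} (hs₀ : 0 ≤ s) (hs₁ : s < 1) :
    μ.real {t | cdf μ t ≤ s} = s := by
  apply le_antisymm
  · by_contra! hlt
    obtain ⟨s', hss', hs'⟩ := exists_between hlt
    obtain ⟨t, rfl⟩ := Ioo_zero_one_subset_range_cdf hμ
      ⟨hs₀.trans_lt hss', hs'.trans_le measureReal_le_one⟩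
    have hsub : {r | cdf μ r ≤ s} ⊆ Iic t := fun r hr =>
      ((monotone_cdf μ).reflect_lt (hr.trans_lt hss')).le
    exact hs'.not_ge ((measureReal_mono hsub).trans_eq (cdf_eq_real μ t).symm)
  · rcases hs₀.eq_or_lt with rfl | hs₀
    · exact measureReal_nonneg
    obtain ⟨t, rfl⟩ := Ioo_zero_one_subset_range_cdf hμ ⟨hs₀, hs₁⟩
    have hsub : Iic t ⊆ {r | cdf μ r ≤ cdf μ t} := fun r hr => monotone_cdf μ hr
    exact (cdf_eq_real μ t).trans_le (measureReal_mono hsub)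

lemma map_cdf_eq_restrict_volume (hμ : Continuous (cdf μ)) :
    μ.map (cdf μ) = volume.restrict (Icc 0 1) := by
  have : IsProbabilityMeasure (μ.map (cdf μ)) :=
    Measure.isProbabilityMeasure_map hμ.measurable.aemeasurable
  refine Measure.ext_of_Iic _ _ fun s => ?_
  rw [Measure.map_apply hμ.measurable measurableSet_Iic, Measure.restrict_apply measurableSet_Iic]
  change μ {t | cdf μ t ≤ s} = _
  rcases lt_or_ge s 0 with hs₀ | hs₀
  · have hcdf : {t | cdf μ t ≤ s} = ∅ :=
      eq_empty_of_forall_notMem fun t ht => (ht.trans_lt hs₀).not_ge (cdf_nonneg μ t)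
    have hIcc : Iic s ∩ Icc 0 1 = ∅ :=
      eq_empty_of_forall_notMem fun t ht => (ht.1.trans_lt hs₀).not_ge ht.2.1
    rw [hcdf, hIcc, measure_empty, measure_empty]
  rcases lt_or_ge s 1 with hs₁ | hs₁
  · have hIcc : Iic s ∩ Icc 0 1 = Icc 0 s := by
      ext t
      exact ⟨fun ht => ⟨ht.2.1, ht.1⟩, fun ht => ⟨ht.2, ht.1, ht.2.trans hs₁.le⟩⟩
    rw [← ofReal_measureReal, measureReal_cdf_le hμ hs₀ hs₁, hIcc, Real.volume_Icc, sub_zero]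
  · have hcdf : {t | cdf μ t ≤ s} = univ :=
      eq_univ_of_forall fun t => (cdf_le_one μ t).trans hs₁
    have hIcc : Iic s ∩ Icc 0 1 = Icc 0 1 :=
      inter_eq_right.2 fun t ht => ht.2.trans hs₁
    rw [hcdf, hIcc, measure_univ, Real.volume_Icc, sub_zero, ENNReal.ofReal_one]

end Distribution

section Variance

variable {α : Type*} [MeasurableSpace α] {μ : Measure α} [IsProbabilityMeasure μ]

lemma tendsto_variance_of_ae_abs_le {X : ℕ → α → ℝ} {Y : α → ℝ} {C : ℝ}
    (hX : ∀ n, AEStronglyMeasurable (X n) μ) (hC : ∀ n, ∀ᵐ x ∂μ, |X n x| ≤ C)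
    (hlim : ∀ᵐ x ∂μ, Tendsto (X · x) atTop (𝓝 (Y x))) :
    Tendsto (fun n => Var[X n; μ]) atTop (𝓝 Var[Y; μ]) := by
  have hY : AEStronglyMeasurable Y μ := aestronglyMeasurable_of_tendsto_ae atTop hX hlim
  have hYC : ∀ᵐ x ∂μ, |Y x| ≤ C := by
    filter_upwards [ae_all_iff.2 hC, hlim] with x hCx hlimx
    exact le_of_tendsto' hlimx.abs hCx
  have hmean : Tendsto (fun n => ∫ x, X n x ∂μ) atTop (𝓝 (∫ x, Y x ∂μ)) :=
    tendsto_integral_of_dominated_convergence (fun _ => C) hX (integrable_const C) hC hlim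
  have hsq : Tendsto (fun n => ∫ x, (X n ^ 2) x ∂μ) atTop (𝓝 (∫ x, (Y ^ 2) x ∂μ)) := by
    refine tendsto_integral_of_dominated_convergence (fun _ => C ^ 2) (fun n => (hX n).pow 2)
      (integrable_const _) (fun n => (hC n).mono fun x hx => ?_) (hlim.mono fun x hx => hx.pow 2)
    simpa only [Pi.pow_apply, norm_pow, Real.norm_eq_abs] using
      pow_le_pow_left₀ (abs_nonneg _) hx 2
  have hvar := hsq.sub (hmean.pow 2)
  rw [← variance_eq_sub (.of_bound hY C hYC)] at hvar
  exact hvar.congr fun n => (variance_eq_sub (.of_bound (hX n) C (hC n))).symm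

end Variance

section Cosine

lemma integral_Icc_cos_pi_mul : ∫ s in Icc (0 : ℝ) 1, cos (π * s) = 0 := by
  rw [integral_Icc_eq_integral_Ioc, ← intervalIntegral.integral_of_le zero_le_one,
    intervalIntegral.integral_comp_mul_left _ pi_ne_zero]
  simp

lemma integral_Icc_cos_pi_mul_sq : ∫ s in Icc (0 : ℝ) 1, cos (π * s) ^ 2 = 1 / 2 := by
  rw [integral_Icc_eq_integral_Ioc, ← intervalIntegral.integral_of_le zero_le_one,
    intervalIntegral.integral_comp_mul_left (fun x => cos x ^ 2) pi_ne_zero, integral_cos_sq]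
  simp only [mul_one, cos_pi, sin_pi, mul_zero, cos_zero, sin_zero, sub_self, zero_add, sub_zero,
    smul_eq_mul, one_div]
  field_simp

lemma integral_Icc_sin_pi_mul_sq : ∫ s in Icc (0 : ℝ) 1, sin (π * s) ^ 2 = 1 / 2 := by
  rw [integral_Icc_eq_integral_Ioc, ← intervalIntegral.integral_of_le zero_le_one,
    intervalIntegral.integral_comp_mul_left (fun x => sin x ^ 2) pi_ne_zero, integral_sin_sq]
  simp only [mul_zero, sin_zero, cos_zero, mul_one, sin_pi, cos_pi, mul_neg, neg_zero, sub_self,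
    zero_add, sub_zero, smul_eq_mul, one_div]
  field_simp

lemma variance_cos_pi_mul_restrict_Icc :
    Var[fun s => cos (π * s); volume.restrict (Icc 0 1)] = 1 / 2 := by
  have : IsProbabilityMeasure (volume.restrict (Icc (0 : ℝ) 1)) := ⟨by simp⟩
  rw [variance_eq_sub (.of_bound (by fun_prop) 1 (ae_of_all _ fun s => abs_cos_le_one _)),
    integral_Icc_cos_pi_mul]
  simp only [Pi.pow_apply, integral_Icc_cos_pi_mul_sq]
  norm_num

end Cosine

section Mollification

lemma lipschitzWith_convolution {G F : Type*} [SeminormedAddCommGroup G] [MeasurableSpace G]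
    [NormedAddCommGroup F] [NormedSpace ℝ F] {ν : Measure G}
    {ρ : G → ℝ} {f : G → F} {K : ℝ≥0} (hρ : ∀ x, 0 ≤ ρ x) (hρ_int : ∫ x, ρ x ∂ν = 1)
    (hconv : ConvolutionExists ρ f (ContinuousLinearMap.lsmul ℝ ℝ) ν) (hf : LipschitzWith K f) :
    LipschitzWith K (ρ ⋆[ContinuousLinearMap.lsmul ℝ ℝ, ν] f) := by
  refine LipschitzWith.of_dist_le_mul fun x y => ?_
  have hρ_integrable : Integrable ρ ν := .of_integral_ne_zero (by simp [hρ_int])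
  have hpointwise : ∀ t, ‖ρ t • f (x - t) - ρ t • f (y - t)‖ ≤ ρ t * (K * dist x y) := fun t => by
    rw [← smul_sub, norm_smul, Real.norm_of_nonneg (hρ t), ← dist_eq_norm]
    simpa only [dist_sub_right] using
      mul_le_mul_of_nonneg_left (hf.dist_le_mul (x - t) (y - t)) (hρ t)
  calc dist ((ρ ⋆[ContinuousLinearMap.lsmul ℝ ℝ, ν] f) x)
        ((ρ ⋆[ContinuousLinearMap.lsmul ℝ ℝ, ν] f) y)
      = ‖∫ t, ρ t • f (x - t) - ρ t • f (y - t) ∂ν‖ := by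
        rw [dist_eq_norm]
        exact congrArg norm (integral_sub (hconv x) (hconv y)).symm
    _ ≤ ∫ t, ρ t * (K * dist x y) ∂ν :=
        norm_integral_le_of_norm_le (hρ_integrable.mul_const _) (ae_of_all _ hpointwise)
    _ = K * dist x y := by rw [integral_mul_const, hρ_int, one_mul]

lemma exists_seq_contDiff_lipschitzWith_tendsto {G F : Type*} [NormedAddCommGroup G]
    [NormedSpace ℝ G] [FiniteDimensional ℝ G] [NormedAddCommGroup F] [NormedSpace ℝ F]
    [CompleteSpace F] {f : G → F} {K : ℝ≥0} (hf : LipschitzWith K f) :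
    ∃ g : ℕ → G → F, (∀ n, ContDiff ℝ ∞ (g n)) ∧ (∀ n, LipschitzWith K (g n)) ∧
      ∀ x, Tendsto (g · x) atTop (𝓝 (f x)) := by
  borelize G
  let φ : ℕ → ContDiffBump (0 : G) := fun n =>
    ⟨1 / (n + 1) / 2, 1 / (n + 1), by positivity, half_lt_self (by positivity)⟩
  let ν : Measure G := Measure.addHaar
  have hf_int : LocallyIntegrable f ν := hf.continuous.locallyIntegrable
  refine ⟨fun n => (φ n).normed ν ⋆[ContinuousLinearMap.lsmul ℝ ℝ, ν] f, fun n => ?_, fun n => ?_,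
    fun x => ?_⟩
  · exact (φ n).hasCompactSupport_normed.contDiff_convolution_left _ (φ n).contDiff_normed hf_int
  · exact lipschitzWith_convolution (φ n).nonneg_normed (φ n).integral_normed
      ((φ n).hasCompactSupport_normed.convolutionExists_left _ (φ n).continuous_normed hf_int) hf
  · exact ContDiffBump.convolution_tendsto_right_of_continuous
      tendsto_one_div_add_atTop_nhds_zero_nat hf.continuous x

end Mollification

lemma norm_fderiv_comp_sq_le {E : Type*} [NormedAddCommGroup E] [NormedSpace ℝ E] {g : ℝ → ℝ}
    {f : E → ℝ} {K : ℝ≥0} (hg : Differentiable ℝ g) (hf : Differentiable ℝ f)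
    (hfK : LipschitzWith K f) (x : E) :
    ‖fderiv ℝ (g ∘ f) x‖ ^ 2 ≤ K ^ 2 * deriv g (f x) ^ 2 := by
  rw [((hg (f x)).hasDerivAt.comp_hasFDerivAt x (hf x).hasFDerivAt).fderiv, norm_smul, mul_pow,
    Real.norm_eq_abs, sq_abs, mul_comm]
  gcongr
  exact norm_fderiv_le_of_lipschitz ℝ hfK

section OrthonormalBasis

variable {E : Type*} [NormedAddCommGroup E] [InnerProductSpace ℝ E] [FiniteDimensional ℝ E]

lemma exists_orthonormalBasis_fin_two_apply_zero_eq (hE : Module.finrank ℝ E = 2) {ξ : E}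
    (hξ : ‖ξ‖ = 1) : ∃ b : OrthonormalBasis (Fin 2) ℝ E, b 0 = ξ := by
  have hortho : Orthonormal ℝ (({0} : Set (Fin 2)).domRestrict fun _ => ξ) :=
    ⟨fun _ => hξ, fun i j hij => (hij (Subsingleton.elim i j)).elim⟩
  obtain ⟨b, hb⟩ := hortho.exists_orthonormalBasis_extension_of_card_eq
    (by rw [hE, Fintype.card_fin])
  exact ⟨b, hb 0 rfl⟩

variable [MeasurableSpace E] [BorelSpace E]

lemma volume_setOf_forall_inner_mem {ι : Type*} [Fintype ι] (b : OrthonormalBasis ι ℝ E)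
    (s : ι → Set ℝ) : volume {x | ∀ i, ⟪b i, x⟫ ∈ s i} = ∏ i, volume (s i) := by
  let coords : E ≃ᵐ (ι → ℝ) := b.measurableEquiv.trans (MeasurableEquiv.toLp 2 (ι → ℝ)).symm
  have hcoords : MeasurePreserving coords :=
    (PiLp.volume_preserving_ofLp ι).comp b.measurePreserving_measurableEquiv
  have hbox : {x | ∀ i, ⟪b i, x⟫ ∈ s i} = coords ⁻¹' univ.pi s := by
    ext x
    simp only [mem_ofPred_eq, mem_preimage, mem_univ_pi, ← b.repr_apply_apply]
    rfl
  rw [hbox, hcoords.measure_preimage_equiv, volume_pi_pi]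

lemma map_inner_restrict_le_smul_volume (b : OrthonormalBasis (Fin 2) ℝ E) {Ω : Set E} {I : Set ℝ}
    (hΩ : ∀ x ∈ Ω, ⟪b 0, x⟫ ∈ I) :
    (volume.restrict Ω).map (fun x => ⟪b 1, x⟫) ≤ volume I • volume := by
  have hmeas : Measurable fun x : E => ⟪b 1, x⟫ := by fun_prop
  refine Measure.le_iff.2 fun s hs => ?_
  calc (volume.restrict Ω).map (fun x => ⟪b 1, x⟫) s
      = volume ((fun x => ⟪b 1, x⟫) ⁻¹' s ∩ Ω) := by
        rw [Measure.map_apply hmeas hs, Measure.restrict_apply (hmeas hs)]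
    _ ≤ volume {x | ∀ i, ⟪b i, x⟫ ∈ ![I, s] i} :=
        measure_mono fun x hx => Fin.forall_fin_two.2 ⟨hΩ x hx.2, hx.1⟩
    _ = volume I * volume s := by
        rw [volume_setOf_forall_inner_mem, Fin.prod_univ_two, Matrix.cons_val_zero,
          Matrix.cons_val_one, Matrix.cons_val_fin_one]
    _ = (volume I • volume : Measure ℝ) s := rfl

lemma map_inner_cond_le_smul_volume (b : OrthonormalBasis (Fin 2) ℝ E) {Ω : Set E} {I : Set ℝ}
    (hΩ : ∀ x ∈ Ω, ⟪b 0, x⟫ ∈ I) :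
    (volume[|Ω]).map (fun x => ⟪b 1, x⟫) ≤ (volume I / volume Ω) • volume := by
  rw [ProbabilityTheory.cond, Measure.map_smul, div_eq_mul_inv, mul_comm, mul_smul]
  gcongr
  exact map_inner_restrict_le_smul_volume b hΩ

end OrthonormalBasis

section NeumannEigenvalue

variable {Ω : Set E2}

lemma nEig1_mul_integral_sq_le {u : E2 → ℝ} (hu : ContDiff ℝ ∞ u) (hmean : ∫ x in Ω, u x = 0) :
    nEig1 Ω * ∫ x in Ω, u x ^ 2 ≤ ∫ x in Ω, ‖fderiv ℝ u x‖ ^ 2 := by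
  have hsq_nonneg : 0 ≤ ∫ x in Ω, u x ^ 2 := by positivity
  rcases hsq_nonneg.eq_or_lt' with hsq | hsq
  · rw [hsq, mul_zero]
    positivity
  rw [← le_div_iff₀ hsq]
  refine csInf_le ⟨0, ?_⟩ ⟨u, hu, hmean, hsq.ne', rfl⟩
  rintro _ ⟨v, -, -, -, rfl⟩
  positivity

variable [IsProbabilityMeasure (volume[|Ω])]

lemma nEig1_mul_variance_le {u : E2 → ℝ} (hu : ContDiff ℝ ∞ u) :
    nEig1 Ω * Var[u; volume[|Ω]] ≤ ∫ x, ‖fderiv ℝ u x‖ ^ 2 ∂volume[|Ω] := by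
  have hΩ : volume Ω ≠ ⊤ := fun h =>
    IsProbabilityMeasure.ne_zero (volume[|Ω]) (cond_eq_zero.2 (.inl h))
  have : IsFiniteMeasure (volume.restrict Ω) := isFiniteMeasure_restrict.2 hΩ
  have hmean : ∫ x, u x ∂volume[|Ω] = ⨍ x in Ω, u x := by
    rw [average, Measure.restrict_apply_univ, ProbabilityTheory.cond]
  have hpoincare := nEig1_mul_integral_sq_le (hu.sub contDiff_const)
    (integral_sub_average (volume.restrict Ω) u)
  simp only [fderiv_sub_const] at hpoincare
  rw [variance_eq_integral hu.continuous.measurable.aemeasurable, hmean, ProbabilityTheory.cond,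
    integral_smul_measure, integral_smul_measure, smul_eq_mul, smul_eq_mul, mul_left_comm]
  exact mul_le_mul_of_nonneg_left hpoincare ENNReal.toReal_nonneg

lemma nEig1_mul_variance_comp_le {f : E2 → ℝ} {g : ℝ → ℝ} {K : ℝ≥0} {C C' : ℝ}
    (hf : LipschitzWith K f) (hg : ContDiff ℝ ∞ g) (hgC : ∀ t, |g t| ≤ C)
    (hgC' : ∀ t, |deriv g t| ≤ C') :
    nEig1 Ω * Var[g ∘ f; volume[|Ω]] ≤ K ^ 2 * ∫ x, deriv g (f x) ^ 2 ∂volume[|Ω] := by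
  obtain ⟨F, hF, hFK, hFlim⟩ := exists_seq_contDiff_lipschitzWith_tendsto hf
  have hg' : Continuous (deriv g) := hg.continuous_deriv (by simp)
  have hsq_le : ∀ t, ‖deriv g t ^ 2‖ ≤ C' ^ 2 := fun t => by
    simpa only [norm_pow, Real.norm_eq_abs] using pow_le_pow_left₀ (abs_nonneg _) (hgC' t) 2
  have hsq_meas : ∀ n, AEStronglyMeasurable (fun x => deriv g (F n x) ^ 2) (volume[|Ω]) :=
    fun n => ((hg'.comp (hF n).continuous).pow 2).aestronglyMeasurable
  have hvar : Tendsto (fun n => Var[g ∘ F n; volume[|Ω]]) atTop (𝓝 Var[g ∘ f; volume[|Ω]]) :=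
    tendsto_variance_of_ae_abs_le
      (fun n => (hg.continuous.comp (hF n).continuous).aestronglyMeasurable)
      (fun n => ae_of_all _ fun x => hgC _)
      (ae_of_all _ fun x => (hg.continuous.tendsto _).comp (hFlim x))
  have hderiv : Tendsto (fun n => ∫ x, deriv g (F n x) ^ 2 ∂volume[|Ω]) atTop
      (𝓝 (∫ x, deriv g (f x) ^ 2 ∂volume[|Ω])) :=
    tendsto_integral_of_dominated_convergence (fun _ => C' ^ 2) hsq_meas (integrable_const _)
      (fun n => ae_of_all _ fun x => hsq_le _)
      (ae_of_all _ fun x => ((hg'.tendsto _).comp (hFlim x)).pow 2)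
  refine le_of_tendsto_of_tendsto' (hvar.const_mul _) (hderiv.const_mul _) fun n => ?_
  calc nEig1 Ω * Var[g ∘ F n; volume[|Ω]]
      ≤ ∫ x, ‖fderiv ℝ (g ∘ F n) x‖ ^ 2 ∂volume[|Ω] := nEig1_mul_variance_le (hg.comp (hF n))
    _ ≤ ∫ x, K ^ 2 * deriv g (F n x) ^ 2 ∂volume[|Ω] := by
        refine integral_mono_of_nonneg (ae_of_all _ fun x => sq_nonneg _)
          ((Integrable.of_bound (hsq_meas n) (C' ^ 2)
            (ae_of_all _ fun x => hsq_le _)).const_mul _) (ae_of_all _ ?_)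
        exact norm_fderiv_comp_sq_le (hg.differentiable (by simp))
          ((hF n).differentiable (by simp)) (hFK n)
    _ = K ^ 2 * ∫ x, deriv g (F n x) ^ 2 ∂volume[|Ω] := integral_const_mul _ _

lemma nEig1_le_of_lipschitzWith_of_map_eq_restrict {f : E2 → ℝ} {K : ℝ≥0} (hf : LipschitzWith K f)
    (hmap : (volume[|Ω]).map f = volume.restrict (Icc 0 1)) : nEig1 Ω ≤ π ^ 2 * K ^ 2 := by
  have hf_meas : AEMeasurable f (volume[|Ω]) := hf.continuous.measurable.aemeasurable
  have hderiv : ∀ s, deriv (fun s => cos (π * s)) s = -(π * sin (π * s)) := fun s => by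
    simp [mul_comm]
  have hpoincare := nEig1_mul_variance_comp_le (Ω := Ω) (g := fun s => cos (π * s)) (C := 1)
    (C' := π) hf (by fun_prop) (fun s => abs_cos_le_one _) fun s => by
      rw [hderiv, abs_neg, abs_mul, abs_of_pos pi_pos]
      exact mul_le_of_le_one_right pi_pos.le (abs_sin_le_one _)
  have hvar : Var[(fun s => cos (π * s)) ∘ f; volume[|Ω]] = 1 / 2 := by
    rw [← variance_map (by fun_prop) hf_meas, hmap, variance_cos_pi_mul_restrict_Icc]
  have henergy : ∫ x, deriv (fun s => cos (π * s)) (f x) ^ 2 ∂volume[|Ω] = π ^ 2 * (1 / 2) := by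
    simp only [hderiv, neg_sq, mul_pow]
    rw [integral_const_mul, ← integral_map (f := fun s => sin (π * s) ^ 2) hf_meas (by fun_prop),
      hmap, integral_Icc_sin_pi_mul_sq]
  rw [hvar, henergy] at hpoincare
  linarith

end NeumannEigenvalue

lemma nEig1_le_of_forall_inner_mem {Ω : Set E2} (hΩ : 0 < (volume Ω).toReal) {ξ : E2}
    (hξ : ‖ξ‖ = 1) {I : Set ℝ} (hI : volume I ≠ ⊤) (hΩI : ∀ x ∈ Ω, ⟪ξ, x⟫ ∈ I) :
    nEig1 Ω ≤ π ^ 2 * (volume I).toReal ^ 2 / (volume Ω).toReal ^ 2 := by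
  obtain ⟨hΩ_pos, hΩ_lt_top⟩ := ENNReal.toReal_pos_iff.1 hΩ
  have : IsProbabilityMeasure (volume[|Ω]) :=
    cond_isProbabilityMeasure_of_finite hΩ_pos.ne' hΩ_lt_top.ne
  obtain ⟨b, rfl⟩ := exists_orthonormalBasis_fin_two_apply_zero_eq finrank_euclideanSpace_fin hξ
  let proj : E2 → ℝ := fun x => ⟪b 1, x⟫
  have hnorm : ‖innerSL ℝ (b 1)‖₊ = 1 := NNReal.eq (by simp)
  have hproj : LipschitzWith 1 proj := hnorm ▸ (innerSL ℝ (b 1)).lipschitz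
  let μ := (volume[|Ω]).map proj
  have : IsProbabilityMeasure μ :=
    Measure.isProbabilityMeasure_map hproj.continuous.measurable.aemeasurable
  obtain ⟨K, hK⟩ : ∃ K : ℝ≥0, (K : ENNReal) = volume I / volume Ω :=
    WithTop.ne_top_iff_exists.1 (ENNReal.div_ne_top hI hΩ_pos.ne')
  have hdensity : μ ≤ (K : ENNReal) • volume := hK ▸ map_inner_cond_le_smul_volume b hΩI
  have hcdf : LipschitzWith K (cdf μ) := lipschitzWith_cdf_of_le_smul_volume hdensity
  have hmap : (volume[|Ω]).map (cdf μ ∘ proj) = volume.restrict (Icc 0 1) := by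
    rw [← Measure.map_map hcdf.continuous.measurable hproj.continuous.measurable,
      map_cdf_eq_restrict_volume hcdf.continuous]
  calc nEig1 Ω ≤ π ^ 2 * (K * 1 : ℝ≥0) ^ 2 :=
        nEig1_le_of_lipschitzWith_of_map_eq_restrict (hcdf.comp hproj) hmap
    _ = π ^ 2 * (volume I).toReal ^ 2 / (volume Ω).toReal ^ 2 := by
        rw [mul_one, ← ENNReal.coe_toReal, hK, ENNReal.toReal_div, div_pow, mul_div_assoc]

lemma inner_mem_Icc_sInf_sSup {E : Type*} [NormedAddCommGroup E] [InnerProductSpace ℝ E]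
    {Ω : Set E} (hΩ : Bornology.IsBounded Ω) (ξ : E) {x : E} (hx : x ∈ Ω) :
    ⟪x, ξ⟫ ∈ Icc (sInf {r : ℝ | ∃ x ∈ Ω, r = ⟪x, ξ⟫}) (sSup {r : ℝ | ∃ x ∈ Ω, r = ⟪x, ξ⟫}) := by
  have himage : {r : ℝ | ∃ x ∈ Ω, r = ⟪x, ξ⟫} = innerSL ℝ ξ '' Ω := by
    ext r
    simp only [mem_ofPred_eq, mem_image, innerSL_apply_apply, real_inner_comm, eq_comm]
  have hbdd : Bornology.IsBounded {r : ℝ | ∃ x ∈ Ω, r = ⟪x, ξ⟫} :=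
    himage ▸ (innerSL ℝ ξ).lipschitz.isBounded_image hΩ
  exact ⟨csInf_le hbdd.bddBelow ⟨x, hx, rfl⟩, le_csSup hbdd.bddAbove ⟨x, hx, rfl⟩⟩

theorem neumann_le_width_bound_general {Ω : Set E2} (hbd : Bornology.IsBounded Ω)
    (hA : 0 < (volume Ω).toReal) :
    nEig1 Ω ≤ π ^ 2 * minWidth Ω ^ 2 / (volume Ω).toReal ^ 2 := by
  have hne : Ω.Nonempty := nonempty_of_measure_ne_zero (ENNReal.toReal_pos_iff.1 hA).1.ne'
  have hwidth_nonneg (ξ : E2) :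
      sInf {r : ℝ | ∃ x ∈ Ω, r = ⟪x, ξ⟫} ≤ sSup {r : ℝ | ∃ x ∈ Ω, r = ⟪x, ξ⟫} :=
    nonempty_Icc.1 ⟨_, inner_mem_Icc_sInf_sSup hbd ξ hne.some_mem⟩
  have hclosed : IsClosed {w : ℝ | nEig1 Ω ≤ π ^ 2 * w ^ 2 / (volume Ω).toReal ^ 2} :=
    isClosed_le continuous_const (by fun_prop)
  refine closure_minimal ?_ hclosed (csInf_mem_closure ?_ ⟨0, ?_⟩)
  · rintro _ ⟨ξ, hξ, rfl⟩
    have hstrip := nEig1_le_of_forall_inner_mem hA hξ measure_Icc_lt_top.ne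
      fun x hx => real_inner_comm x ξ ▸ inner_mem_Icc_sInf_sSup hbd ξ hx
    rwa [Real.volume_Icc, ENNReal.toReal_ofReal (sub_nonneg.2 (hwidth_nonneg ξ))] at hstrip
  · exact ⟨_, EuclideanSpace.single 0 1, by simp, rfl⟩
  · rintro _ ⟨ξ, -, rfl⟩
    exact sub_nonneg.2 (hwidth_nonneg ξ)

/-- Henrot–Lemenant–Lucardesi type upper bound: for a bounded open plane set of area `A` and
minimal width `w`, one has `μ₁(Ω) ≤ π² w² / A²`. -/
theorem neumann_le_width_bound (Ω : Set E2) (hopen : IsOpen Ω)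
    (hbd : Bornology.IsBounded Ω) (hA : 0 < (volume Ω).toReal) :
    nEig1 Ω ≤ π^2 * (minWidth Ω)^2 / (volume Ω).toReal^2 :=
  neumann_le_width_bound_general hbd hA
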